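/- Let f : ℝ → ℝ be a nonnegative, twice continuously differentiable function with compact support such that g := √f is also twice continuously differentiable with compact support. Then for all real numbers λ₀ ≠ λ₁, the divided difference of f admits the Birman–Solomyak representation (f(λ₀) - f(λ₁)) / (λ₀ - λ₁) = (i/√(2π)) ∫_{ℝ²} 1_Π(s₀, s₁) · sgn(s₀) · 𝓕g(s₀) · ( e^{i(s₀ - s₁)λ₀} g(λ₀) e^{i s₁ λ₁} + e^{i(s₀ - s₁)λ₀} e^{i s₁ λ₁} g(λ₁) ) d(s₀, s₁), where the integral is with respect to two-dimensional Lebesgue measure and is absolutely convergent. -/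

import Mathlib

open MeasureTheory

/-- The Fourier transform with the normalization `𝓕f(ξ) = (2π)^{-1/2} ∫ f(x) e^{-iξx} dx`. -/
noncomputable def fourierTransform' (f : ℝ → ℂ) (ξ : ℝ) : ℂ :=
  (Real.sqrt (2 * Real.pi))⁻¹ • ∫ x : ℝ, f x * Complex.exp (-(Complex.I * ξ * x))

/-- The region `Π = {(s₀, s₁) : |s₁| ≤ |s₀|, sign s₀ = sign s₁}`. -/
def PiRegion : Set (ℝ × ℝ) :=
  {p : ℝ × ℝ | (0 ≤ p.2 ∧ p.2 ≤ p.1) ∨ (p.1 ≤ p.2 ∧ p.2 ≤ 0)}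

/-!
Since `f = g²`, the divided difference of `f` is `g(λ₀) + g(λ₁)` times that of `g`, so it suffices
to represent the latter. The factor `sgn s₀` turns the integral over the slice of `Π` at `s₀` into
the oriented integral from `0` to `s₀`, where
`∫ e^{i(s₀ - s₁)λ₀} e^{i s₁ λ₁} ds₁ = (e^{i s₀ λ₀} - e^{i s₀ λ₁}) / (i(λ₀ - λ₁))`,
and Fourier inversion for `g` evaluates the remaining integral in `s₀`. As that slice has length
`|s₀|`, absolute convergence amounts to integrability of `s ↦ s 𝓕g(s)`, i.e. of the Fourier
transform of `g'`; this follows from Plancherel's theorem for `g'` and `g''`.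
-/

section FourierTransformIntegrability

open scoped FourierTransform SchwartzMap

variable {V E : Type*} [NormedAddCommGroup V] [InnerProductSpace ℝ V] [FiniteDimensional ℝ V]
  [MeasurableSpace V] [BorelSpace V] [NormedAddCommGroup E]

theorem continuous_fourier_of_integrable [NormedSpace ℂ E] {f : V → E} (hf : Integrable f) :
    Continuous (𝓕 f) :=
  VectorFourier.fourierIntegral_continuous (L := innerₗ V) Real.continuous_fourierChar
    continuous_inner hf

variable [InnerProductSpace ℂ E] [CompleteSpace E]

theorem fourier_toLp_two_ae_eq {f : V → E} (hf : Integrable f) (hf₂ : MemLp f 2) :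
    (𝓕 (hf₂.toLp f) : Lp E 2 (volume : Measure V)) =ᵐ[volume] 𝓕 f := by
  refine ae_eq_of_integral_contDiff_smul_eq ((Lp.memLp _).locallyIntegrable one_le_two)
    (continuous_fourier_of_integrable hf).locallyIntegrable fun φ hφ hφs ↦ ?_
  let Φ : 𝓢(V, ℂ) := (hφs.comp_left Complex.ofReal_zero).toSchwartzMap
    (Complex.ofRealCLM.contDiff.comp hφ)
  calc ∫ x, φ x • (𝓕 (hf₂.toLp f) : Lp E 2 (volume : Measure V)) x
      = ∫ x, Φ x • (𝓕 (hf₂.toLp f) : Lp E 2 (volume : Measure V)) x := rfl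
    _ = ∫ x, (𝓕 Φ) x • hf₂.toLp f x := by
        simpa only [TemperedDistribution.fourier_apply, Lp.toTemperedDistribution_apply] using
          (DFunLike.congr_fun (Lp.fourier_toTemperedDistribution_eq (hf₂.toLp f)) Φ).symm
    _ = ∫ x, (𝓕 Φ) x • f x :=
        integral_congr_ae (hf₂.coeFn_toLp.mono fun x hx ↦ congrArg ((𝓕 Φ) x • ·) hx)
    _ = ∫ x, Φ x • 𝓕 f x := by
        have := VectorFourier.integral_fourierIntegral_smul_eq_flip (L := innerₗ V)
          Real.continuous_fourierChar continuous_inner (Φ.integrable (μ := volume)) hf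
        rwa [flip_innerₗ] at this
    _ = ∫ x, φ x • 𝓕 f x := rfl

theorem memLp_two_fourier {f : V → E} (hf : Integrable f) (hf₂ : MemLp f 2) : MemLp (𝓕 f) 2 :=
  (memLp_congr_ae (fourier_toLp_two_ae_eq hf hf₂)).1 (Lp.memLp _)

-- By Plancherel `(1 + ξ²)‖𝓕 f ξ‖²` is integrable, and AM-GM bounds `‖𝓕 f ξ‖` by the sum of this
-- function and `(1 + ξ²)⁻¹`.
theorem integrable_fourier_of_memLp_two_deriv {f : ℝ → E} (hf : Integrable f) (hf₂ : MemLp f 2)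
    (hd : Differentiable ℝ f) (hf' : Integrable (deriv f)) (hf'₂ : MemLp (deriv f) 2) :
    Integrable (𝓕 f) := by
  have hsq : Integrable fun ξ ↦ ‖𝓕 f ξ‖ ^ 2 := (memLp_two_fourier hf hf₂).norm.integrable_sq
  have hsq' : Integrable fun ξ ↦ ‖𝓕 (deriv f) ξ‖ ^ 2 :=
    (memLp_two_fourier hf' hf'₂).norm.integrable_sq
  refine ((hsq.add hsq').add integrable_inv_one_add_sq).mono'
    (continuous_fourier_of_integrable hf).aestronglyMeasurable (.of_forall fun ξ ↦ ?_)
  have hderiv : ‖𝓕 (deriv f) ξ‖ = 2 * Real.pi * |ξ| * ‖𝓕 f ξ‖ := by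
    simp [Real.fourier_deriv hf hd hf', norm_smul, abs_of_pos Real.pi_pos]
  have hweight : (1 + ξ ^ 2) * ‖𝓕 f ξ‖ ^ 2 ≤ ‖𝓕 f ξ‖ ^ 2 + ‖𝓕 (deriv f) ξ‖ ^ 2 := by
    have hpi : 1 ≤ (2 * Real.pi) ^ 2 := one_le_pow₀ (by linarith [Real.pi_gt_three])
    rw [hderiv, mul_pow, mul_pow, sq_abs]
    nlinarith [mul_nonneg (sq_nonneg ξ) (sq_nonneg ‖𝓕 f ξ‖)]
  have hpos : 0 < 1 + ξ ^ 2 := by positivity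
  have hamgm : ‖𝓕 f ξ‖ ≤ (1 + ξ ^ 2) * ‖𝓕 f ξ‖ ^ 2 + (1 + ξ ^ 2)⁻¹ := by
    have : (1 + ξ ^ 2) * (1 + ξ ^ 2)⁻¹ = 1 := mul_inv_cancel₀ hpos.ne'
    nlinarith [mul_nonneg hpos.le (sq_nonneg (‖𝓕 f ξ‖ - (1 + ξ ^ 2)⁻¹)), norm_nonneg (𝓕 f ξ)]
  exact hamgm.trans (add_le_add_left hweight _)

theorem integrable_smul_fourier_of_contDiff_two {f : ℝ → E} (hf : ContDiff ℝ 2 f)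
    (hs : HasCompactSupport f) : Integrable fun ξ : ℝ ↦ ξ • 𝓕 f ξ := by
  have hf' : ContDiff ℝ 1 (deriv f) := hf.deriv'
  have hc'' : Continuous (deriv (deriv f)) := hf'.continuous_deriv le_rfl
  have hi := hf.continuous.integrable_of_hasCompactSupport (μ := volume) hs
  have hi' := hf'.continuous.integrable_of_hasCompactSupport (μ := volume) hs.deriv
  have hi'' := hc''.integrable_of_hasCompactSupport (μ := volume) hs.deriv.deriv
  have hderiv : Integrable (𝓕 (deriv f)) :=
    integrable_fourier_of_memLp_two_deriv hi'
      (hf'.continuous.memLp_of_hasCompactSupport hs.deriv) (hf'.differentiable one_ne_zero) hi''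
      (hc''.memLp_of_hasCompactSupport hs.deriv.deriv)
  refine (hderiv.smul (2 * Real.pi * Complex.I)⁻¹).congr (.of_forall fun ξ ↦ ?_)
  have hne : (2 * Real.pi * Complex.I : ℂ) ≠ 0 := Complex.two_pi_I_ne_zero
  simp only [Pi.smul_apply, Real.fourier_deriv hi (hf.differentiable two_ne_zero) hi', smul_smul]
  rw [inv_mul_cancel_left₀ hne, Complex.coe_smul]

end FourierTransformIntegrability

theorem integrable_of_integrable_smul_id {E : Type*} [NormedAddCommGroup E] [NormedSpace ℝ E]
    {A : ℝ → E} (hloc : LocallyIntegrable A) (hA : Integrable fun s : ℝ ↦ s • A s) :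
    Integrable A := by
  have hnear : IntegrableOn A (Set.Icc (-1) 1) := hloc.integrableOn_isCompact isCompact_Icc
  have hfar : IntegrableOn A (Set.Icc (-1) 1)ᶜ := by
    refine Integrable.mono hA.integrableOn hloc.aestronglyMeasurable.restrict
      (ae_restrict_of_forall_mem measurableSet_Icc.compl fun s hs ↦ ?_)
    have : 1 ≤ |s| := (lt_of_not_ge fun h ↦ hs (abs_le.1 h)).le
    rw [norm_smul]
    exact le_mul_of_one_le_left (norm_nonneg _) this
  exact integrableOn_univ.1 (Set.union_compl_self (Set.Icc (-1 : ℝ) 1) ▸ hnear.union hfar)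

section UnitaryFourierTransform

open scoped FourierTransform

theorem fourierTransform'_eq_fourier (g : ℝ → ℂ) (ξ : ℝ) :
    fourierTransform' g ξ = (√(2 * Real.pi))⁻¹ • 𝓕 g (ξ / (2 * Real.pi)) := by
  rw [fourierTransform', Real.fourier_real_eq_integral_exp_smul]
  congr! 3 with x
  rw [smul_eq_mul, mul_comm]
  congr 2
  push_cast
  field_simp

variable {g : ℝ → ℂ}

theorem continuous_fourierTransform' (hg : Integrable g) : Continuous (fourierTransform' g) := by
  have := continuous_fourier_of_integrable hg
  simp_rw [funext (fourierTransform'_eq_fourier g)]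
  fun_prop

theorem integrable_mul_fourierTransform'_of_contDiff_two (hg : ContDiff ℝ 2 g)
    (hs : HasCompactSupport g) : Integrable fun s : ℝ ↦ s * fourierTransform' g s := by
  have := (((integrable_smul_fourier_of_contDiff_two hg hs).comp_div
    Real.two_pi_pos.ne').const_mul (2 * Real.pi / √(2 * Real.pi) : ℂ))
  refine this.congr (.of_forall fun s ↦ ?_)
  simp only [fourierTransform'_eq_fourier, Complex.real_smul]
  push_cast
  field_simp

theorem integrable_fourierTransform' (hg : Integrable g)
    (hg' : Integrable fun s : ℝ ↦ s * fourierTransform' g s) :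
    Integrable (fourierTransform' g) :=
  integrable_of_integrable_smul_id (continuous_fourierTransform' hg).locallyIntegrable hg'

theorem integral_fourierTransform'_mul_exp (hgc : Continuous g) (hg : Integrable g)
    (hg' : Integrable (fourierTransform' g)) (l : ℝ) :
    ∫ s : ℝ, fourierTransform' g s * Complex.exp (Complex.I * s * l) = √(2 * Real.pi) * g l := by
  have hpi := Real.two_pi_pos
  have hfourier : 𝓕 g = fun w ↦ √(2 * Real.pi) • fourierTransform' g (2 * Real.pi * w) := by
    ext w
    rw [fourierTransform'_eq_fourier, smul_inv_smul₀ (by positivity),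
      mul_div_cancel_left₀ _ hpi.ne']
  have hint : Integrable (𝓕 g) := hfourier ▸ (hg'.comp_mul_left' hpi.ne').smul (√(2 * Real.pi))
  have hinv : g l = √(2 * Real.pi) •
      ∫ w : ℝ, fourierTransform' g (2 * Real.pi * w) *
        Complex.exp (Complex.I * (2 * Real.pi * w : ℝ) * l) := by
    rw [← integral_smul, ← congrFun (hgc.fourierInv_fourier_eq hg hint) l, Real.fourierInv_eq']
    refine integral_congr_ae (.of_forall fun w ↦ ?_)
    simp only [hfourier, smul_eq_mul, Complex.real_smul, RCLike.inner_apply, conj_trivial]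
    push_cast
    ring_nf
  rw [hinv, Measure.integral_comp_mul_left
    (fun s : ℝ ↦ fourierTransform' g s * Complex.exp (Complex.I * s * l)), smul_smul,
    Complex.real_smul, ← mul_assoc, ← Complex.ofReal_mul, abs_of_pos (inv_pos.2 hpi), ← mul_assoc,
    Real.mul_self_sqrt hpi.le, mul_inv_cancel₀ hpi.ne', Complex.ofReal_one, one_mul]

end UnitaryFourierTransform

section PiRegion

theorem isClosed_piRegion : IsClosed PiRegion :=
  ((isClosed_le continuous_const continuous_snd).inter
    (isClosed_le continuous_snd continuous_fst)).union
  ((isClosed_le continuous_fst continuous_snd).inter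
    (isClosed_le continuous_snd continuous_const))

theorem preimage_mk_piRegion (s : ℝ) : Prod.mk s ⁻¹' PiRegion = Set.uIcc 0 s := by
  ext t
  rw [Set.mem_uIcc]
  rfl

theorem piRegion_indicator_mk {M : Type*} [Zero M] (F : ℝ × ℝ → M) (s t : ℝ) :
    PiRegion.indicator F (s, t) = (Set.uIcc 0 s).indicator (fun t ↦ F (s, t)) t := by
  rw [← preimage_mk_piRegion]
  exact (Set.indicator_comp_right (Prod.mk s)).symm

variable {E : Type*} [NormedAddCommGroup E] [NormedSpace ℝ E]

theorem integrableOn_piRegion_comp_fst {A : ℝ → E} (hAm : AEStronglyMeasurable A)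
    (hA : Integrable fun s : ℝ ↦ s • A s) :
    IntegrableOn (fun p : ℝ × ℝ ↦ A p.1) PiRegion := by
  have hm : MeasurableSet PiRegion := isClosed_piRegion.measurableSet
  rw [← integrable_indicator_iff hm, Measure.volume_eq_prod,
    integrable_prod_iff (hAm.comp_fst.indicator hm)]
  simp only [piRegion_indicator_mk]
  refine ⟨.of_forall fun s ↦ ?_, hA.norm.congr (.of_forall fun s ↦ ?_)⟩
  · exact (integrable_indicator_iff measurableSet_uIcc).2
      (integrableOn_const isCompact_uIcc.measure_lt_top.ne)
  · simp only [norm_indicator_eq_indicator_norm, integral_indicator measurableSet_uIcc,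
      setIntegral_const, Measure.real, Real.volume_interval, norm_smul, sub_zero, smul_eq_mul,
      ENNReal.toReal_ofReal (abs_nonneg s), Real.norm_eq_abs]

theorem measurable_real_sign : Measurable Real.sign :=
  Measurable.ite measurableSet_Iio measurable_const
    (Measurable.ite measurableSet_Ioi measurable_const measurable_const)

theorem norm_real_sign_le_one (s : ℝ) : ‖Real.sign s‖ ≤ 1 := by
  rcases Real.sign_apply_eq s with h | h | h <;> simp [h]

theorem integrableOn_sign_fst_smul {F : ℝ × ℝ → E} {S : Set (ℝ × ℝ)} (hF : IntegrableOn F S) :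
    IntegrableOn (fun p ↦ Real.sign p.1 • F p) S :=
  hF.bdd_smul _ (measurable_real_sign.comp measurable_fst).aestronglyMeasurable
    (.of_forall fun p ↦ norm_real_sign_le_one p.1)

theorem sign_smul_setIntegral_uIcc (f : ℝ → E) (s : ℝ) :
    Real.sign s • ∫ t in Set.uIcc 0 s, f t = ∫ t in (0)..s, f t := by
  rcases lt_trichotomy s 0 with hs | rfl | hs
  · rw [Real.sign_of_neg hs, Set.uIcc_of_ge hs.le, integral_Icc_eq_integral_Ioc,
      intervalIntegral.integral_of_ge hs.le, neg_one_smul]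
  · simp
  · rw [Real.sign_of_pos hs, Set.uIcc_of_le hs.le, integral_Icc_eq_integral_Ioc,
      intervalIntegral.integral_of_le hs.le, one_smul]

theorem setIntegral_piRegion_sign_smul {F : ℝ × ℝ → E} (hF : IntegrableOn F PiRegion) :
    ∫ p in PiRegion, Real.sign p.1 • F p = ∫ s : ℝ, ∫ t in (0)..s, F (s, t) := by
  have hm : MeasurableSet PiRegion := isClosed_piRegion.measurableSet
  have hint := (integrable_indicator_iff hm).2 (integrableOn_sign_fst_smul hF)
  rw [← integral_indicator hm, Measure.volume_eq_prod, integral_prod _ hint]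
  simp only [piRegion_indicator_mk, integral_indicator measurableSet_uIcc, integral_smul,
    sign_smul_setIntegral_uIcc]

end PiRegion

section DividedDifference

variable {g : ℝ → ℂ} {lam₀ lam₁ : ℝ}

theorem norm_exp_I_mul_mul (x l : ℝ) : ‖Complex.exp (Complex.I * x * l)‖ = 1 := by
  rw [mul_assoc, ← Complex.ofReal_mul, Complex.norm_exp_I_mul_ofReal]

theorem intervalIntegral_exp_mul_exp (hne : lam₀ ≠ lam₁) (s : ℝ) :
    ∫ t in (0)..s, Complex.exp (Complex.I * (s - t) * lam₀) * Complex.exp (Complex.I * t * lam₁) =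
      (Complex.exp (Complex.I * s * lam₀) - Complex.exp (Complex.I * s * lam₁)) /
        (Complex.I * (lam₀ - lam₁)) := by
  have hsub : (lam₁ - lam₀ : ℂ) ≠ 0 := sub_ne_zero.2 (Complex.ofReal_injective.ne hne.symm)
  have hc : Complex.I * (lam₁ - lam₀) ≠ 0 := mul_ne_zero Complex.I_ne_zero hsub
  calc ∫ t in (0)..s, Complex.exp (Complex.I * (s - t) * lam₀) * Complex.exp (Complex.I * t * lam₁)
      = ∫ t in (0)..s, Complex.exp (Complex.I * s * lam₀) *
          Complex.exp (Complex.I * (lam₁ - lam₀) * t) := by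
        refine intervalIntegral.integral_congr fun t _ ↦ ?_
        simp only [← Complex.exp_add]
        ring_nf
    _ = Complex.exp (Complex.I * s * lam₀) *
          ((Complex.exp (Complex.I * (lam₁ - lam₀) * s) - 1) / (Complex.I * (lam₁ - lam₀))) := by
        rw [intervalIntegral.integral_const_mul, integral_exp_mul_complex hc]
        simp only [Complex.ofReal_zero, mul_zero, Complex.exp_zero]
    _ = (Complex.exp (Complex.I * s * lam₁) - Complex.exp (Complex.I * s * lam₀)) /
          (Complex.I * (lam₁ - lam₀)) := by
        rw [mul_div_assoc', mul_sub, ← Complex.exp_add, mul_one]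
        ring_nf
    _ = _ := by rw [← neg_sub, ← neg_sub (lam₀ : ℂ), mul_neg, neg_div_neg_eq]

/-- The integrand `ĝ(s₀) e^{i(s₀ - s₁)λ₀} e^{i s₁ λ₁}` of the Birman–Solomyak representation of the
divided difference `g^{[1]}(λ₀, λ₁)`, without the factor `sgn s₀`, which orients `PiRegion`. -/
noncomputable def birmanSolomyakIntegrand (g : ℝ → ℂ) (lam₀ lam₁ : ℝ) (p : ℝ × ℝ) : ℂ :=
  fourierTransform' g p.1 * (Complex.exp (Complex.I * (p.1 - p.2) * lam₀) *
    Complex.exp (Complex.I * p.2 * lam₁))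

theorem integrableOn_birmanSolomyakIntegrand (hg : Integrable g)
    (hg' : Integrable fun s : ℝ ↦ s * fourierTransform' g s) (lam₀ lam₁ : ℝ) :
    IntegrableOn (birmanSolomyakIntegrand g lam₀ lam₁) PiRegion := by
  refine (integrableOn_piRegion_comp_fst
    (continuous_fourierTransform' hg).aestronglyMeasurable hg').mul_bdd ?_ (c := 1) ?_
  · exact Continuous.aestronglyMeasurable (by fun_prop)
  · refine .of_forall fun p ↦ ?_
    rw [norm_mul, ← Complex.ofReal_sub, norm_exp_I_mul_mul, norm_exp_I_mul_mul, one_mul]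

theorem integral_fourierTransform'_mul_exp_sub_exp (hgc : Continuous g) (hg : Integrable g)
    (hg' : Integrable (fourierTransform' g)) (lam₀ lam₁ : ℝ) :
    ∫ s : ℝ, fourierTransform' g s *
        (Complex.exp (Complex.I * s * lam₀) - Complex.exp (Complex.I * s * lam₁)) =
      √(2 * Real.pi) * (g lam₀ - g lam₁) := by
  have hint (l : ℝ) : Integrable fun s : ℝ ↦
      fourierTransform' g s * Complex.exp (Complex.I * s * l) :=
    hg'.mul_bdd (c := 1) (by fun_prop : Continuous _).aestronglyMeasurable
      (.of_forall fun s ↦ (norm_exp_I_mul_mul s l).le)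
  simp only [mul_sub]
  rw [integral_sub (hint lam₀) (hint lam₁), integral_fourierTransform'_mul_exp hgc hg hg',
    integral_fourierTransform'_mul_exp hgc hg hg']

theorem dividedDifference_eq_setIntegral_birmanSolomyakIntegrand (hgc : Continuous g)
    (hg : Integrable g) (hg' : Integrable fun s : ℝ ↦ s * fourierTransform' g s)
    (hne : lam₀ ≠ lam₁) :
    (g lam₀ - g lam₁) / (lam₀ - lam₁) = Complex.I / √(2 * Real.pi) *
      ∫ p in PiRegion, Real.sign p.1 • birmanSolomyakIntegrand g lam₀ lam₁ p := by
  have hsub : (lam₀ - lam₁ : ℂ) ≠ 0 := sub_ne_zero.2 (Complex.ofReal_injective.ne hne)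
  have hsqrt : (√(2 * Real.pi) : ℂ) ≠ 0 :=
    Complex.ofReal_ne_zero.2 (Real.sqrt_pos.2 Real.two_pi_pos).ne'
  have hslice (s : ℝ) : ∫ t in (0)..s, birmanSolomyakIntegrand g lam₀ lam₁ (s, t) =
      fourierTransform' g s * (Complex.exp (Complex.I * s * lam₀) -
        Complex.exp (Complex.I * s * lam₁)) / (Complex.I * (lam₀ - lam₁)) := by
    rw [mul_div_assoc, ← intervalIntegral_exp_mul_exp hne, ← intervalIntegral.integral_const_mul]
    rfl
  rw [setIntegral_piRegion_sign_smul (integrableOn_birmanSolomyakIntegrand hg hg' lam₀ lam₁)]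
  simp only [hslice]
  rw [integral_div, integral_fourierTransform'_mul_exp_sub_exp hgc hg
    (integrable_fourierTransform' hg hg')]
  field_simp

end DividedDifference

theorem divided_difference_BS_representation_modified_general {g : ℝ → ℂ} (hgc : Continuous g)
    (hg : Integrable g) (hg' : Integrable fun s : ℝ ↦ s * fourierTransform' g s)
    {lam₀ lam₁ : ℝ} (hne : lam₀ ≠ lam₁) :
    Integrable (PiRegion.indicator (fun p : ℝ × ℝ =>
        (Real.sign p.1 : ℂ) * fourierTransform' g p.1 *
          (Complex.exp (Complex.I * (p.1 - p.2) * lam₀) * g lam₀ *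
              Complex.exp (Complex.I * p.2 * lam₁) +
            Complex.exp (Complex.I * (p.1 - p.2) * lam₀) *
              Complex.exp (Complex.I * p.2 * lam₁) * g lam₁))) ∧
    (g lam₀ ^ 2 - g lam₁ ^ 2) / (lam₀ - lam₁) =
      (Complex.I / √(2 * Real.pi)) *
        ∫ p : ℝ × ℝ, PiRegion.indicator (fun p : ℝ × ℝ =>
          (Real.sign p.1 : ℂ) * fourierTransform' g p.1 *
            (Complex.exp (Complex.I * (p.1 - p.2) * lam₀) * g lam₀ *
                Complex.exp (Complex.I * p.2 * lam₁) +
              Complex.exp (Complex.I * (p.1 - p.2) * lam₀) *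
                Complex.exp (Complex.I * p.2 * lam₁) * g lam₁)) p := by
  have hm : MeasurableSet PiRegion := isClosed_piRegion.measurableSet
  have hfactor (p : ℝ × ℝ) : (Real.sign p.1 : ℂ) * fourierTransform' g p.1 *
      (Complex.exp (Complex.I * (p.1 - p.2) * lam₀) * g lam₀ *
          Complex.exp (Complex.I * p.2 * lam₁) +
        Complex.exp (Complex.I * (p.1 - p.2) * lam₀) *
          Complex.exp (Complex.I * p.2 * lam₁) * g lam₁) =
      (Real.sign p.1 • birmanSolomyakIntegrand g lam₀ lam₁ p) * (g lam₀ + g lam₁) := by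
    rw [birmanSolomyakIntegrand, Complex.real_smul]
    ring
  simp only [hfactor]
  refine ⟨(integrable_indicator_iff hm).2 ((integrableOn_sign_fst_smul
    (integrableOn_birmanSolomyakIntegrand hg hg' lam₀ lam₁)).mul_const _), ?_⟩
  rw [integral_indicator hm, integral_mul_const, ← mul_assoc,
    ← dividedDifference_eq_setIntegral_birmanSolomyakIntegrand hgc hg hg' hne]
  ring

/-- Let `f : ℝ → ℝ` be nonnegative, `C²` with compact support, with
`g := √f` also `C²` with compact support. Then for `λ₀ ≠ λ₁`,
`(f(λ₀)-f(λ₁))/(λ₀-λ₁) = (i/√(2π)) ∫_{ℝ²} 1_Π(s₀,s₁) sgn(s₀) 𝓕g(s₀)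
   (e^{i(s₀-s₁)λ₀} g(λ₀) e^{is₁λ₁} + e^{i(s₀-s₁)λ₀} e^{is₁λ₁} g(λ₁)) d(s₀,s₁)`,
the integral being absolutely convergent. -/
theorem divided_difference_BS_representation_modified
    (f : ℝ → ℝ) (hfpos : ∀ x, 0 ≤ f x)
    (hf : ContDiff ℝ 2 f) (hfsupp : HasCompactSupport f)
    (g : ℝ → ℝ) (hgdef : g = fun x => Real.sqrt (f x))
    (hg : ContDiff ℝ 2 g) (hgsupp : HasCompactSupport g)
    (lam₀ lam₁ : ℝ) (hne : lam₀ ≠ lam₁) :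
    Integrable (PiRegion.indicator (fun p : ℝ × ℝ =>
        (Real.sign p.1 : ℂ) * fourierTransform' (fun x => Complex.ofReal (g x)) p.1 *
          (Complex.exp (Complex.I * (p.1 - p.2) * lam₀) * (g lam₀ : ℂ) *
              Complex.exp (Complex.I * p.2 * lam₁) +
            Complex.exp (Complex.I * (p.1 - p.2) * lam₀) *
              Complex.exp (Complex.I * p.2 * lam₁) * (g lam₁ : ℂ)))) ∧
    ((f lam₀ - f lam₁ : ℝ) : ℂ) / ((lam₀ - lam₁ : ℝ) : ℂ) =
      (Complex.I / (Real.sqrt (2 * Real.pi) : ℂ)) *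
        ∫ p : ℝ × ℝ, PiRegion.indicator (fun p : ℝ × ℝ =>
          (Real.sign p.1 : ℂ) * fourierTransform' (fun x => Complex.ofReal (g x)) p.1 *
            (Complex.exp (Complex.I * (p.1 - p.2) * lam₀) * (g lam₀ : ℂ) *
                Complex.exp (Complex.I * p.2 * lam₁) +
              Complex.exp (Complex.I * (p.1 - p.2) * lam₀) *
                Complex.exp (Complex.I * p.2 * lam₁) * (g lam₁ : ℂ))) p := by
  have hfg (x : ℝ) : f x = g x ^ 2 := by rw [hgdef, Real.sq_sqrt (hfpos x)]
  have hgC : ContDiff ℝ 2 fun x ↦ (g x : ℂ) := Complex.ofRealCLM.contDiff.comp hg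
  have hgS : HasCompactSupport fun x ↦ (g x : ℂ) := hgsupp.comp_left Complex.ofReal_zero
  simpa only [hfg, Complex.ofReal_sub, Complex.ofReal_pow] using
    divided_difference_BS_representation_modified_general hgC.continuous
      (hgC.continuous.integrable_of_hasCompactSupport hgS)
      (integrable_mul_fourierTransform'_of_contDiff_two hgC hgS) hne
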